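/- For all information structures u and v on K × ℕ × ℕ, the supremum over all payoff functions g ∈ 𝒢 of val(v,g) − val(u,g) equals the minimum over pairs of garblings q₁, q₂ ∈ 𝒬 of ‖q₁.u − v.q₂‖, and this minimum is attained. -/

import Mathlib

open scoped BigOperators ENNReal

namespace ValueDistance

/-- An information structure: a probability distribution on `K × ℕ × ℕ`
(state, signal of player 1, signal of player 2). -/
abbrev InfoStruct (K : Type) := PMF (K × ℕ × ℕ)

/-- A behavior strategy / garbling : a map `ℕ → Δ(ℕ)`. -/
abbrev Garbling : Type := ℕ → PMF ℕ

variable {K : Type}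

/-- `g` is a payoff function with action bound `L` : values in `[-1,1]`,
`g k i j = -1` when `i ≥ L`, and `g k i j = 1` when `i < L` and `j ≥ L`. -/
def IsPayoffL (L : ℕ) (g : K → ℕ → ℕ → ℝ) : Prop :=
  (∀ k i j, g k i j ∈ Set.Icc (-1 : ℝ) 1) ∧
  (∀ k i j, L ≤ i → g k i j = -1) ∧
  (∀ k i j, i < L → L ≤ j → g k i j = 1)

/-- `g` belongs to the set `𝒢` of payoff functions. -/
def IsPayoff (g : K → ℕ → ℕ → ℝ) : Prop := ∃ L, IsPayoffL L g

/-- `g` belongs to the set `𝒢₁` of single-agent (player 1) problems. -/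
def IsPayoff1 (g : K → ℕ → ℕ → ℝ) : Prop :=
  IsPayoff g ∧ ∀ k i j j', g k i j = g k i j'

/-- Expected payoff in the Bayesian game `Γ(u,g)` when player 1 uses the behavior
strategy `σ` and player 2 uses `τ`. -/
noncomputable def payoff (u : InfoStruct K) (g : K → ℕ → ℕ → ℝ)
    (σ τ : Garbling) : ℝ :=
  ∑' (x : K × ℕ × ℕ) (i : ℕ) (j : ℕ),
    (u x).toReal * (σ x.2.1 i).toReal * (τ x.2.2 j).toReal * g x.1 i j

/-- The value `val(u,g)` of the zero-sum Bayesian game `Γ(u,g)`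
(the common value of `sup inf` and `inf sup` of the expected payoff;
we take `sup inf` as the definition). -/
noncomputable def val (u : InfoStruct K) (g : K → ℕ → ℕ → ℝ) : ℝ :=
  ⨆ σ : Garbling, ⨅ τ : Garbling, payoff u g σ τ

/-- Total variation distance `‖u − v‖`. -/
noncomputable def tv {α : Type} (u v : PMF α) : ℝ :=
  ∑' x : α, |(u x).toReal - (v x).toReal|

/-- `q.u` : player 1's signal garbled through `q`. -/
noncomputable def garbleLeft (q : Garbling) (u : InfoStruct K) : InfoStruct K :=
  u.bind (fun x => (q x.2.1).map (fun c => (x.1, c, x.2.2)))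

/-- `u.q` : player 2's signal garbled through `q`. -/
noncomputable def garbleRight (u : InfoStruct K) (q : Garbling) : InfoStruct K :=
  u.bind (fun x => (q x.2.2).map (fun d => (x.1, x.2.1, d)))

/-- The value-based distance `d(u,v) = sup_{g ∈ 𝒢} |val(u,g) − val(v,g)|`. -/
noncomputable def dVal (u v : InfoStruct K) : ℝ :=
  ⨆ g : {g : K → ℕ → ℕ → ℝ // IsPayoff g}, |val u g.1 - val v g.1|

/-- The single-agent distance `d₁(u,v) = sup_{g ∈ 𝒢₁} |val(u,g) − val(v,g)|`. -/
noncomputable def d1 (u v : InfoStruct K) : ℝ :=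
  ⨆ g : {g : K → ℕ → ℕ → ℝ // IsPayoff1 g}, |val u g.1 - val v g.1|

/-- Marginal of an information structure on `K × ℕ` (state, player 1's signal). -/
noncomputable def marg1 (u : InfoStruct K) : PMF (K × ℕ) :=
  u.map (fun x => (x.1, x.2.1))

/-- Garbling of a single-agent information structure:
`(q.w)(k,c) = Σ_s w(k,s)·q(s)({c})`. -/
noncomputable def garble1 (q : Garbling) (w : PMF (K × ℕ)) : PMF (K × ℕ) :=
  w.bind (fun x => (q x.2).map (fun c => (x.1, c)))

/-- Marginal of an information structure on the states. -/
noncomputable def margK (u : InfoStruct K) : PMF K := u.map Prod.fst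

/-- Marginal of an information structure on `K × ℕ` (state, player 2's signal). -/
noncomputable def margKD (u : InfoStruct K) : PMF (K × ℕ) :=
  u.map (fun x => (x.1, x.2.2))

/-- `σ.q` : on signal `c`, draw `c'` according to `q(c)` and play `σ(c')`. -/
noncomputable def compGarble (σ q : Garbling) : Garbling :=
  fun c => (q c).bind σ

/-- `u ∈ 𝒰(L)` : both players' signals are `< L` with probability 1. -/
def InU (L : ℕ) (u : InfoStruct K) : Prop :=
  ∀ x : K × ℕ × ℕ, u x ≠ 0 → x.2.1 < L ∧ x.2.2 < L

/-- `q ∈ 𝒬(L)` : garbling with values supported on `{0,…,L−1}`. -/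
def GarblingIn (L : ℕ) (q : Garbling) : Prop :=
  ∀ n m, q n m ≠ 0 → m < L

/-- The two players' signals are conditionally independent given the state:
`u(k)·u(k,c,d) = u(k,c)·u(k,d)` for all `k, c, d`
(equivalently `u(c,d|k) = u(c|k)·u(d|k)` whenever `u(k) > 0`). -/
def CondIndep (u : InfoStruct K) : Prop :=
  ∀ (k : K) (c d : ℕ),
    (∑' y : ℕ × ℕ, u (k, y)) * u (k, c, d)
      = (∑' d' : ℕ, u (k, c, d')) * (∑' c' : ℕ, u (k, c', d))

end ValueDistance

namespace ValueDistance

noncomputable def EE {α : Type} (P : PMF α) (h : α → ℝ) : ℝ := ∑' y, (P y).toReal * h y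

theorem pmf_summable {α : Type} (P : PMF α) : Summable (fun y => (P y).toReal) :=
  ENNReal.summable_toReal P.tsum_coe_ne_top

theorem pmf_tsum {α : Type} (P : PMF α) : ∑' y, (P y).toReal = 1 := by
  rw [← ENNReal.tsum_toReal_eq (fun a => P.apply_ne_top a), P.tsum_coe]; simp

theorem EE_summable {α : Type} (P : PMF α) (h : α → ℝ) (hh : ∀ y, |h y| ≤ 1) :
    Summable (fun y => (P y).toReal * h y) := by
  refine Summable.of_norm_bounded (pmf_summable P) (fun y => ?_)
  rw [norm_mul, Real.norm_eq_abs, Real.norm_eq_abs, abs_of_nonneg ENNReal.toReal_nonneg]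
  exact mul_le_of_le_one_right ENNReal.toReal_nonneg (hh y)

theorem EE_mono {α : Type} (P : PMF α) (h h' : α → ℝ) (hh : ∀ y, |h y| ≤ 1)
    (hh' : ∀ y, |h' y| ≤ 1) (hle : ∀ y, h y ≤ h' y) : EE P h ≤ EE P h' :=
  Summable.tsum_le_tsum (fun y => mul_le_mul_of_nonneg_left (hle y) ENNReal.toReal_nonneg)
    (EE_summable P h hh) (EE_summable P h' hh')

theorem EE_const {α : Type} (P : PMF α) (c : ℝ) : EE P (fun _ => c) = c := by
  unfold EE; rw [tsum_mul_right, pmf_tsum, one_mul]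

theorem EE_abs {α : Type} (P : PMF α) (h : α → ℝ) (hh : ∀ y, |h y| ≤ 1) : |EE P h| ≤ 1 := by
  rw [abs_le]
  constructor
  · have := EE_mono P (fun _ => -1) h (by simp) hh (fun y => (abs_le.1 (hh y)).1)
    rwa [EE_const] at this
  · have := EE_mono P h (fun _ => 1) hh (by simp) (fun y => (abs_le.1 (hh y)).2)
    rwa [EE_const] at this

theorem EE_pure {α : Type} (a : α) (h : α → ℝ) : EE (PMF.pure a) h = h a := by
  classical
  unfold EE
  rw [tsum_eq_single a]
  · simp
  · intro b hb; simp [PMF.pure_apply, hb]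

theorem EE_bind {α β : Type} (P : PMF α) (F : α → PMF β) (h : β → ℝ) (hh : ∀ y, |h y| ≤ 1) :
    EE (P.bind F) h = EE P (fun x => EE (F x) h) := by
  unfold EE
  have e1 : ∀ y, (P.bind F y).toReal = ∑' x, (P x).toReal * (F x y).toReal := by
    intro y
    rw [PMF.bind_apply, ENNReal.tsum_toReal_eq]
    · simp
    · intro a; exact ENNReal.mul_ne_top (P.apply_ne_top _) ((F a).apply_ne_top _)
  have hs0 : Summable (fun p : α × β => (P p.1).toReal * (F p.1 p.2).toReal) := by
    have h0 : (0 : α × β → ℝ) ≤ fun p : α × β => (P p.1).toReal * (F p.1 p.2).toReal :=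
      fun p => mul_nonneg ENNReal.toReal_nonneg ENNReal.toReal_nonneg
    rw [summable_prod_of_nonneg h0]
    refine ⟨fun x => Summable.mul_left ((P x).toReal) (pmf_summable (F x)), ?_⟩
    simp only [tsum_mul_left, pmf_tsum, mul_one]
    exact pmf_summable P
  have hs : Summable (Function.uncurry fun (x : α) (y : β) =>
      (P x).toReal * (F x y).toReal * h y) := by
    refine Summable.of_norm_bounded hs0 (fun p => ?_)
    rcases p with ⟨x, y⟩
    simp only [Function.uncurry]
    rw [norm_mul, Real.norm_of_nonneg (mul_nonneg ENNReal.toReal_nonneg ENNReal.toReal_nonneg)]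
    exact mul_le_of_le_one_right (mul_nonneg ENNReal.toReal_nonneg ENNReal.toReal_nonneg) (hh y)
  simp only [e1, ← tsum_mul_right, ← tsum_mul_left]
  rw [Summable.tsum_comm hs]
  simp only [mul_assoc]

theorem EE_map {α β : Type} (P : PMF α) (f : α → β) (h : β → ℝ) (hh : ∀ y, |h y| ≤ 1) :
    EE (P.map f) h = EE P (fun x => h (f x)) := by
  unfold PMF.map
  rw [EE_bind _ _ _ hh]
  simp only [Function.comp, EE_pure]

theorem EE_comm {α β : Type} (P : PMF α) (Q : PMF β) (f : α → β → ℝ) (hf : ∀ a b, |f a b| ≤ 1) :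
    EE P (fun a => EE Q (fun b => f a b)) = EE Q (fun b => EE P (fun a => f a b)) := by
  have h1 := EE_bind P (fun a => Q.bind fun b => PMF.pure (a, b)) (fun p => f p.1 p.2)
    (fun p => hf _ _)
  rw [PMF.bind_comm, EE_bind _ _ _ (fun p => hf _ _)] at h1
  have e1 : ∀ b, EE (P.bind fun a => PMF.pure (a, b)) (fun p => f p.1 p.2)
      = EE P (fun a => f a b) := fun b => by
    rw [EE_bind _ _ _ (fun p => hf _ _)]; simp only [EE_pure]
  have e2 : ∀ a, EE (Q.bind fun b => PMF.pure (a, b)) (fun p => f p.1 p.2)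
      = EE Q (fun b => f a b) := fun b => by
    rw [EE_bind _ _ _ (fun p => hf _ _)]; simp only [EE_pure]
  simp only [e1, e2] at h1
  exact h1.symm

theorem EE_left (u : InfoStruct K) (q : Garbling) (h : K × ℕ × ℕ → ℝ) (hh : ∀ y, |h y| ≤ 1) :
    EE (garbleLeft q u) h = EE u (fun x => EE (q x.2.1) (fun c => h (x.1, c, x.2.2))) := by
  unfold garbleLeft
  rw [EE_bind _ _ _ hh]
  simp only [EE_map _ _ _ hh]

theorem EE_right (u : InfoStruct K) (q : Garbling) (h : K × ℕ × ℕ → ℝ) (hh : ∀ y, |h y| ≤ 1) :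
    EE (garbleRight u q) h = EE u (fun x => EE (q x.2.2) (fun c => h (x.1, x.2.1, c))) := by
  unfold garbleRight
  rw [EE_bind _ _ _ hh]
  simp only [EE_map _ _ _ hh]

theorem payoff_eq (u : InfoStruct K) (g : K → ℕ → ℕ → ℝ) (σ τ : Garbling) :
    payoff u g σ τ = EE u (fun x => EE (σ x.2.1) (fun i => EE (τ x.2.2) (fun j => g x.1 i j))) := by
  unfold payoff EE
  simp only [← tsum_mul_left, mul_assoc]

theorem payoff_left (u : InfoStruct K) (g : K → ℕ → ℕ → ℝ) (hg : ∀ k i j, |g k i j| ≤ 1)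
    (q σ τ : Garbling) :
    payoff (garbleLeft q u) g σ τ = payoff u g (compGarble σ q) τ := by
  rw [payoff_eq, payoff_eq, EE_left]
  · unfold compGarble
    congr 1; funext x
    rw [EE_bind]
    intro i; exact EE_abs _ _ (fun j => hg _ _ _)
  · intro y; exact EE_abs _ _ (fun i => EE_abs _ _ (fun j => hg _ _ _))

theorem payoff_right (u : InfoStruct K) (g : K → ℕ → ℕ → ℝ) (hg : ∀ k i j, |g k i j| ≤ 1)
    (q σ τ : Garbling) :
    payoff (garbleRight u q) g σ τ = payoff u g σ (compGarble τ q) := by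
  rw [payoff_eq, payoff_eq, EE_right]
  · unfold compGarble
    congr 1; funext x
    rw [EE_comm (q x.2.2) (σ x.2.1)]
    · congr 1; funext i
      rw [EE_bind]
      intro j; exact hg _ _ _
    · intro a b; exact EE_abs _ _ (fun j => hg _ _ _)
  · intro y; exact EE_abs _ _ (fun i => EE_abs _ _ (fun j => hg _ _ _))

theorem payoff_abs (u : InfoStruct K) (g : K → ℕ → ℕ → ℝ) (hg : ∀ k i j, |g k i j| ≤ 1)
    (σ τ : Garbling) : |payoff u g σ τ| ≤ 1 := by
  rw [payoff_eq]
  exact EE_abs _ _ (fun y => EE_abs _ _ (fun i => EE_abs _ _ (fun j => hg _ _ _)))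

theorem tv_summable {α : Type} (P Q : PMF α) :
    Summable (fun x => |(P x).toReal - (Q x).toReal|) :=
  ((pmf_summable P).sub (pmf_summable Q)).abs

theorem EE_sub_le {α : Type} (P Q : PMF α) (h : α → ℝ) (hh : ∀ y, |h y| ≤ 1) :
    EE P h - EE Q h ≤ tv Q P := by
  unfold EE tv
  rw [← Summable.tsum_sub (EE_summable P h hh) (EE_summable Q h hh)]
  refine Summable.tsum_le_tsum (fun y => ?_)
    ((EE_summable P h hh).sub (EE_summable Q h hh)) (tv_summable _ _)
  rw [← sub_mul, abs_sub_comm]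
  refine (le_abs_self _).trans ?_
  rw [abs_mul]
  exact mul_le_of_le_one_right (abs_nonneg _) (hh y)

theorem IsPayoff.abs {g : K → ℕ → ℕ → ℝ} (hg : IsPayoff g) (k i j) : |g k i j| ≤ 1 := by
  obtain ⟨L, h, -⟩ := hg
  exact abs_le.2 (h k i j)

instance : Nonempty Garbling := ⟨fun n => PMF.pure n⟩

theorem inf_bdd (u : InfoStruct K) (g : K → ℕ → ℕ → ℝ) (hg : ∀ k i j, |g k i j| ≤ 1)
    (σ : Garbling) : BddBelow (Set.range fun τ => payoff u g σ τ) := by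
  refine ⟨-1, ?_⟩
  rintro _ ⟨τ, rfl⟩
  exact (abs_le.1 (payoff_abs u g hg σ τ)).1

theorem sup_bdd (u : InfoStruct K) (g : K → ℕ → ℕ → ℝ) (hg : ∀ k i j, |g k i j| ≤ 1) :
    BddAbove (Set.range fun σ => ⨅ τ : Garbling, payoff u g σ τ) := by
  refine ⟨1, ?_⟩
  rintro _ ⟨σ, rfl⟩
  exact (ciInf_le (inf_bdd u g hg σ) (Classical.arbitrary _)).trans
    (abs_le.1 (payoff_abs u g hg σ _)).2

theorem upper (u v : InfoStruct K) (g : K → ℕ → ℕ → ℝ) (hg : ∀ k i j, |g k i j| ≤ 1)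
    (q₁ q₂ : Garbling) :
    val v g - val u g ≤ tv (garbleLeft q₁ u) (garbleRight v q₂) := by
  rw [sub_le_iff_le_add, add_comm]
  unfold val
  refine ciSup_le (fun σ => ?_)
  have h1 := le_ciSup (sup_bdd u g hg) (compGarble σ q₁)
  refine le_trans ?_ (add_le_add_left h1 _)
  rw [← sub_le_iff_le_add]
  refine le_ciInf (fun τ => ?_)
  rw [sub_le_iff_le_add]
  refine (ciInf_le (inf_bdd v g hg σ) (compGarble τ q₂)).trans ?_
  rw [← payoff_right v g hg, ← payoff_left u g hg, payoff_eq, payoff_eq]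
  have := EE_sub_le (garbleRight v q₂) (garbleLeft q₁ u)
    (fun x => EE (σ x.2.1) (fun i => EE (τ x.2.2) (fun j => g x.1 i j)))
    (fun y => EE_abs _ _ (fun i => EE_abs _ _ (fun j => hg _ _ _)))
  linarith

/-- lower bound on the value difference -/
theorem lower (u v : InfoStruct K) (g : K → ℕ → ℕ → ℝ) (hg : ∀ k i j, |g k i j| ≤ 1) (r : ℝ)
    (h : ∀ σ τ : Garbling, r ≤ EE (garbleRight v τ) (fun x => g x.1 x.2.1 x.2.2)
      - EE (garbleLeft σ u) (fun x => g x.1 x.2.1 x.2.2)) :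
    r ≤ val v g - val u g := by
  have p1 : ∀ τ, payoff v g (fun n => PMF.pure n) τ
      = EE (garbleRight v τ) (fun x => g x.1 x.2.1 x.2.2) := fun τ => by
    rw [payoff_eq, EE_right _ _ _ (fun y => hg _ _ _)]
    simp only [EE_pure]
  have p2 : ∀ σ, payoff u g σ (fun n => PMF.pure n)
      = EE (garbleLeft σ u) (fun x => g x.1 x.2.1 x.2.2) := fun σ => by
    rw [payoff_eq, EE_left _ _ _ (fun y => hg _ _ _)]
    simp only [EE_pure]
  have h1 : val u g ≤ val v g - r := by
    refine ciSup_le (fun σ => ?_)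
    refine (ciInf_le (inf_bdd u g hg σ) (fun n => PMF.pure n)).trans ?_
    rw [le_sub_iff_add_le]
    refine le_trans ?_ (le_ciSup (sup_bdd v g hg) (fun n => PMF.pure n))
    refine le_ciInf (fun τ => ?_)
    rw [p1, p2]
    linarith [h σ τ]
  linarith

end ValueDistance
namespace ValueDistance

theorem left_apply (u : InfoStruct K) (q : Garbling) (k : K) (i j : ℕ) :
    (garbleLeft q u (k, i, j)).toReal = ∑' c, (u (k, c, j)).toReal * (q c i).toReal := by
  classical
  have h : garbleLeft q u (k, i, j) = ∑' c, u (k, c, j) * q c i := by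
    unfold garbleLeft
    rw [PMF.bind_apply]
    have hinj : Function.Injective (fun c : ℕ => ((k, c, j) : K × ℕ × ℕ)) := by
      intro a b hab; simpa using hab
    rw [← hinj.tsum_eq]
    · refine tsum_congr (fun c => ?_)
      congr 1
      rw [PMF.map_apply, tsum_eq_single i]
      · simp
      · intro b hb; simp [Ne.symm hb]
    · rintro ⟨k', c', j'⟩ hx
      simp only [Function.mem_support, ne_eq, mul_eq_zero, not_or] at hx
      obtain ⟨-, hx⟩ := hx
      rw [← ne_eq, ← PMF.mem_support_iff, PMF.mem_support_map_iff] at hx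
      obtain ⟨a, -, ha⟩ := hx
      simp only [Prod.mk.injEq] at ha
      exact ⟨c', by simp [ha.1, ha.2.2]⟩
  rw [h, ENNReal.tsum_toReal_eq]
  · simp
  · intro a; exact ENNReal.mul_ne_top (u.apply_ne_top _) ((q a).apply_ne_top _)

theorem right_apply (u : InfoStruct K) (q : Garbling) (k : K) (i j : ℕ) :
    (garbleRight u q (k, i, j)).toReal = ∑' d, (u (k, i, d)).toReal * (q d j).toReal := by
  classical
  have h : garbleRight u q (k, i, j) = ∑' d, u (k, i, d) * q d j := by
    unfold garbleRight
    rw [PMF.bind_apply]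
    have hinj : Function.Injective (fun c : ℕ => ((k, i, c) : K × ℕ × ℕ)) := by
      intro a b hab; simpa using hab
    rw [← hinj.tsum_eq]
    · refine tsum_congr (fun c => ?_)
      congr 1
      rw [PMF.map_apply, tsum_eq_single j]
      · simp
      · intro b hb; simp [Ne.symm hb]
    · rintro ⟨k', c', j'⟩ hx
      simp only [Function.mem_support, ne_eq, mul_eq_zero, not_or] at hx
      obtain ⟨-, hx⟩ := hx
      rw [← ne_eq, ← PMF.mem_support_iff, PMF.mem_support_map_iff] at hx
      obtain ⟨a, -, ha⟩ := hx
      simp only [Prod.mk.injEq] at ha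
      exact ⟨j', by simp [ha.1, ha.2.1]⟩
  rw [h, ENNReal.tsum_toReal_eq]
  · simp
  · intro a; exact ENNReal.mul_ne_top (u.apply_ne_top _) ((q a).apply_ne_top _)

theorem exists_garbling (q : ℕ → ℕ → ℝ) (h0 : ∀ c i, 0 ≤ q c i) (h1 : ∀ c, HasSum (q c) 1) :
    ∃ σ : Garbling, ∀ c i, (σ c i).toReal = q c i := by
  refine ⟨fun c => ⟨fun i => ENNReal.ofReal (q c i), ?_⟩, fun c i => ENNReal.toReal_ofReal (h0 c i)⟩
  have := ENNReal.ofReal_tsum_of_nonneg (h0 c) (h1 c).summable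
  rw [(h1 c).tsum_eq, ENNReal.ofReal_one] at this
  rw [this]
  exact ENNReal.summable.hasSum

def Sub : Set (ℕ → ℕ → ℝ) :=
  {q | ∀ c, (∀ i, 0 ≤ q c i) ∧ ∀ s : Finset ℕ, ∑ i ∈ s, q c i ≤ 1}

theorem Sub.le_one {q : ℕ → ℕ → ℝ} (hq : q ∈ Sub) (c i) : q c i ≤ 1 := by
  simpa using (hq c).2 {i}

theorem Sub.summable {q : ℕ → ℕ → ℝ} (hq : q ∈ Sub) (c) : Summable (q c) :=
  summable_of_sum_le (hq c).1 (hq c).2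

theorem Sub.tsum_le {q : ℕ → ℕ → ℝ} (hq : q ∈ Sub) (c) : ∑' i, q c i ≤ 1 :=
  Real.tsum_le_of_sum_le (hq c).1 (hq c).2

theorem Sub.of_garbling (q : Garbling) : (fun c i => (q c i).toReal) ∈ Sub := by
  intro c
  refine ⟨fun i => ENNReal.toReal_nonneg, fun s => ?_⟩
  rw [← pmf_tsum (q c)]
  exact (pmf_summable (q c)).sum_le_tsum s (fun i _ => ENNReal.toReal_nonneg)

theorem Sub.isCompact : IsCompact Sub := by
  have hc : IsCompact (Set.pi Set.univ (fun _ : ℕ => Set.pi Set.univ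
      (fun _ : ℕ => Set.Icc (0:ℝ) 1))) :=
    isCompact_univ_pi (fun _ => isCompact_univ_pi (fun _ => isCompact_Icc))
  refine hc.of_isClosed_subset ?_ ?_
  · have : Sub = ⋂ c : ℕ, ((⋂ i : ℕ, {q : ℕ → ℕ → ℝ | 0 ≤ q c i}) ∩
        ⋂ s : Finset ℕ, {q : ℕ → ℕ → ℝ | ∑ i ∈ s, q c i ≤ 1}) := by
      ext q; simp [Sub]
    rw [this]
    refine isClosed_iInter (fun c => IsClosed.inter (isClosed_iInter fun i => ?_)
      (isClosed_iInter fun s => ?_))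
    · exact isClosed_le (by fun_prop) (by fun_prop)
    · exact isClosed_le (by fun_prop) (by fun_prop)
  · intro q hq c _ i _
    exact ⟨(hq c).1 i, Sub.le_one hq c i⟩

noncomputable def aL (u : InfoStruct K) (q : ℕ → ℕ → ℝ) (k : K) (i j : ℕ) : ℝ :=
  ∑' c, (u (k, c, j)).toReal * q c i

noncomputable def bR (u : InfoStruct K) (q : ℕ → ℕ → ℝ) (k : K) (i j : ℕ) : ℝ :=
  ∑' d, (u (k, i, d)).toReal * q d j

theorem u_sum_c (u : InfoStruct K) (k : K) (j : ℕ) : Summable (fun c => (u (k, c, j)).toReal) :=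
  (pmf_summable u).comp_injective (i := fun c : ℕ => ((k, c, j) : K × ℕ × ℕ))
    (by intro a b hab; simpa using hab)

theorem u_sum_d (u : InfoStruct K) (k : K) (i : ℕ) : Summable (fun d => (u (k, i, d)).toReal) :=
  (pmf_summable u).comp_injective (i := fun c : ℕ => ((k, i, c) : K × ℕ × ℕ))
    (by intro a b hab; simpa using hab)

theorem u_sum_k (u : InfoStruct K) (k : K) :
    Summable (fun p : ℕ × ℕ => (u (k, p.1, p.2)).toReal) :=
  (pmf_summable u).comp_injective (i := fun p : ℕ × ℕ => ((k, p.1, p.2) : K × ℕ × ℕ))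
    (by intro a b hab; simpa [Prod.ext_iff] using hab)

theorem mul_q_le {t x : ℝ} (ht : 0 ≤ t) (hx : x ≤ 1) : t * x ≤ t :=
  mul_le_of_le_one_right ht hx

theorem aL_summable (u : InfoStruct K) {q : ℕ → ℕ → ℝ} (hq : q ∈ Sub) (k : K) (i j : ℕ) :
    Summable (fun c => (u (k, c, j)).toReal * q c i) :=
  Summable.of_nonneg_of_le (fun c => mul_nonneg ENNReal.toReal_nonneg ((hq c).1 i))
    (fun c => mul_q_le ENNReal.toReal_nonneg (Sub.le_one hq c i)) (u_sum_c u k j)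

theorem bR_summable (u : InfoStruct K) {q : ℕ → ℕ → ℝ} (hq : q ∈ Sub) (k : K) (i j : ℕ) :
    Summable (fun d => (u (k, i, d)).toReal * q d j) :=
  Summable.of_nonneg_of_le (fun c => mul_nonneg ENNReal.toReal_nonneg ((hq c).1 j))
    (fun c => mul_q_le ENNReal.toReal_nonneg (Sub.le_one hq c j)) (u_sum_d u k i)

theorem aL_nonneg (u : InfoStruct K) {q : ℕ → ℕ → ℝ} (hq : q ∈ Sub) (k : K) (i j : ℕ) :
    0 ≤ aL u q k i j :=
  tsum_nonneg (fun c => mul_nonneg ENNReal.toReal_nonneg ((hq c).1 i))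

theorem bR_nonneg (u : InfoStruct K) {q : ℕ → ℕ → ℝ} (hq : q ∈ Sub) (k : K) (i j : ℕ) :
    0 ≤ bR u q k i j :=
  tsum_nonneg (fun c => mul_nonneg ENNReal.toReal_nonneg ((hq c).1 j))

theorem aL_le (u : InfoStruct K) {q : ℕ → ℕ → ℝ} (hq : q ∈ Sub) (k : K) (i j : ℕ) :
    aL u q k i j ≤ ∑' c, (u (k, c, j)).toReal :=
  Summable.tsum_le_tsum (fun c => mul_q_le ENNReal.toReal_nonneg (Sub.le_one hq c i))
    (aL_summable u hq k i j) (u_sum_c u k j)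

theorem U_summable (u : InfoStruct K) (k : K) : Summable (fun j => ∑' c, (u (k, c, j)).toReal) :=
  (u_sum_k u k).prod_symm.prod

theorem V_summable (u : InfoStruct K) (k : K) : Summable (fun i => ∑' d, (u (k, i, d)).toReal) :=
  (u_sum_k u k).prod

theorem bR_sum_aux (u : InfoStruct K) {q : ℕ → ℕ → ℝ} (hq : q ∈ Sub) (k : K) (i : ℕ) :
    Summable (fun p : ℕ × ℕ => (u (k, i, p.1)).toReal * q p.1 p.2) := by
  have h0 : (0 : ℕ × ℕ → ℝ) ≤ fun p : ℕ × ℕ => (u (k, i, p.1)).toReal * q p.1 p.2 :=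
    fun p => mul_nonneg ENNReal.toReal_nonneg ((hq p.1).1 p.2)
  rw [summable_prod_of_nonneg h0]
  refine ⟨fun d => Summable.mul_left ((u (k, i, d)).toReal) (Sub.summable hq d), ?_⟩
  simp only [tsum_mul_left]
  exact Summable.of_nonneg_of_le
    (fun d => mul_nonneg ENNReal.toReal_nonneg (tsum_nonneg (hq d).1))
    (fun d => mul_q_le ENNReal.toReal_nonneg (Sub.tsum_le hq d)) (u_sum_d u k i)

theorem bR_sum_j (u : InfoStruct K) {q : ℕ → ℕ → ℝ} (hq : q ∈ Sub) (k : K) (i : ℕ) :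
    Summable (fun j => bR u q k i j) :=
  (bR_sum_aux u hq k i).prod_symm.prod

theorem bR_tsum_le (u : InfoStruct K) {q : ℕ → ℕ → ℝ} (hq : q ∈ Sub) (k : K) (i : ℕ) :
    ∑' j, bR u q k i j ≤ ∑' d, (u (k, i, d)).toReal := by
  have hs : Summable (Function.uncurry fun d j : ℕ => (u (k, i, d)).toReal * q d j) :=
    bR_sum_aux u hq k i
  unfold bR
  rw [Summable.tsum_comm hs]
  simp only [tsum_mul_left]
  refine Summable.tsum_le_tsum (fun d => mul_q_le ENNReal.toReal_nonneg (Sub.tsum_le hq d)) ?_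
    (u_sum_d u k i)
  exact Summable.of_nonneg_of_le
    (fun d => mul_nonneg ENNReal.toReal_nonneg (tsum_nonneg (hq d).1))
    (fun d => mul_q_le ENNReal.toReal_nonneg (Sub.tsum_le hq d)) (u_sum_d u k i)

noncomputable def MF [Fintype K] (u v : InfoStruct K) (p : (ℕ → ℕ → ℝ) × (ℕ → ℕ → ℝ)) : ℝ :=
  ∑ k : K, ∑' i, ∑' j, min (aL u p.1 k i j) (bR v p.2 k i j)

theorem min_sum_j (u v : InfoStruct K) {q₁ q₂ : ℕ → ℕ → ℝ} (h1 : q₁ ∈ Sub) (h2 : q₂ ∈ Sub)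
    (k : K) (i : ℕ) : Summable (fun j => min (aL u q₁ k i j) (bR v q₂ k i j)) :=
  Summable.of_nonneg_of_le (fun j => le_min (aL_nonneg u h1 k i j) (bR_nonneg v h2 k i j))
    (fun j => min_le_right _ _) (bR_sum_j v h2 k i)

theorem min_tsum_le (u v : InfoStruct K) {q₁ q₂ : ℕ → ℕ → ℝ} (h1 : q₁ ∈ Sub) (h2 : q₂ ∈ Sub)
    (k : K) (i : ℕ) : ∑' j, min (aL u q₁ k i j) (bR v q₂ k i j) ≤ ∑' d, (v (k, i, d)).toReal :=
  (Summable.tsum_le_tsum (fun j => min_le_right _ _) (min_sum_j u v h1 h2 k i)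
    (bR_sum_j v h2 k i)).trans (bR_tsum_le v h2 k i)

theorem min_tsum_nonneg (u v : InfoStruct K) {q₁ q₂ : ℕ → ℕ → ℝ} (h1 : q₁ ∈ Sub) (h2 : q₂ ∈ Sub)
    (k : K) (i : ℕ) : 0 ≤ ∑' j, min (aL u q₁ k i j) (bR v q₂ k i j) :=
  tsum_nonneg (fun j => le_min (aL_nonneg u h1 k i j) (bR_nonneg v h2 k i j))

theorem min_sum_i (u v : InfoStruct K) {q₁ q₂ : ℕ → ℕ → ℝ} (h1 : q₁ ∈ Sub) (h2 : q₂ ∈ Sub)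
    (k : K) : Summable (fun i => ∑' j, min (aL u q₁ k i j) (bR v q₂ k i j)) :=
  Summable.of_nonneg_of_le (fun i => min_tsum_nonneg u v h1 h2 k i)
    (fun i => min_tsum_le u v h1 h2 k i) (V_summable v k)

theorem MF_continuousOn [Fintype K] (u v : InfoStruct K) :
    ContinuousOn (MF u v) (Sub ×ˢ Sub) := by
  unfold MF
  refine continuousOn_finsetSum _ (fun k _ => ?_)
  refine continuousOn_tsum (fun i => ?_) (V_summable v k) (fun i p hp => ?_)
  · refine continuousOn_tsum (fun j => ?_) (U_summable u k) (fun j p hp => ?_)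
    · refine ContinuousOn.inf ?_ ?_
      · unfold aL
        refine continuousOn_tsum (fun c => ?_) (u_sum_c u k j) (fun c p hp => ?_)
        · fun_prop
        · rw [Real.norm_of_nonneg (mul_nonneg ENNReal.toReal_nonneg ((hp.1 c).1 i))]
          exact mul_q_le ENNReal.toReal_nonneg (Sub.le_one hp.1 c i)
      · unfold bR
        refine continuousOn_tsum (fun c => ?_) (u_sum_d v k i) (fun c p hp => ?_)
        · fun_prop
        · rw [Real.norm_of_nonneg (mul_nonneg ENNReal.toReal_nonneg ((hp.2 c).1 j))]
          exact mul_q_le ENNReal.toReal_nonneg (Sub.le_one hp.2 c j)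
    · rw [Real.norm_of_nonneg (le_min (aL_nonneg u hp.1 k i j) (bR_nonneg v hp.2 k i j))]
      exact (min_le_left _ _).trans (aL_le u hp.1 k i j)
  · rw [Real.norm_of_nonneg (min_tsum_nonneg u v hp.1 hp.2 k i)]
    exact min_tsum_le u v hp.1 hp.2 k i

theorem MF_mono [Fintype K] (u v : InfoStruct K) {q₁ q₂ q₁' q₂' : ℕ → ℕ → ℝ} (h1 : q₁ ∈ Sub)
    (h2 : q₂ ∈ Sub) (h1' : q₁' ∈ Sub) (h2' : q₂' ∈ Sub) (hle1 : ∀ c i, q₁ c i ≤ q₁' c i)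
    (hle2 : ∀ c i, q₂ c i ≤ q₂' c i) : MF u v (q₁, q₂) ≤ MF u v (q₁', q₂') := by
  unfold MF
  refine Finset.sum_le_sum (fun k _ => ?_)
  refine Summable.tsum_le_tsum (fun i => ?_) (min_sum_i u v h1 h2 k) (min_sum_i u v h1' h2' k)
  refine Summable.tsum_le_tsum (fun j => ?_) (min_sum_j u v h1 h2 k i) (min_sum_j u v h1' h2' k i)
  refine min_le_min ?_ ?_
  · exact Summable.tsum_le_tsum (fun c => mul_le_mul_of_nonneg_left (hle1 c i)
      ENNReal.toReal_nonneg) (aL_summable u h1 k i j) (aL_summable u h1' k i j)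
  · exact Summable.tsum_le_tsum (fun c => mul_le_mul_of_nonneg_left (hle2 c j)
      ENNReal.toReal_nonneg) (bR_summable v h2 k i j) (bR_summable v h2' k i j)

theorem tv_eq [Fintype K] (u v : InfoStruct K) (q₁ q₂ : Garbling) :
    tv (garbleLeft q₁ u) (garbleRight v q₂)
      = 2 - 2 * MF u v (fun c i => (q₁ c i).toReal, fun c i => (q₂ c i).toReal) := by
  have hs : Summable (fun x => min (garbleLeft q₁ u x).toReal (garbleRight v q₂ x).toReal) :=
    Summable.of_nonneg_of_le (fun x => le_min ENNReal.toReal_nonneg ENNReal.toReal_nonneg)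
      (fun x => min_le_left _ _) (pmf_summable _)
  have hM : MF u v (fun c i => (q₁ c i).toReal, fun c i => (q₂ c i).toReal)
      = ∑' x, min (garbleLeft q₁ u x).toReal (garbleRight v q₂ x).toReal := by
    rw [hs.tsum_prod, tsum_fintype]
    unfold MF
    refine Finset.sum_congr rfl (fun k _ => ?_)
    have hk := hs.comp_injective (i := fun p : ℕ × ℕ => ((k, p) : K × ℕ × ℕ))
      (by intro a b hab; simpa using hab)
    simp only [Function.comp_def] at hk
    rw [hk.tsum_prod]
    refine tsum_congr (fun i => tsum_congr (fun j => ?_))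
    rw [left_apply, right_apply]
    rfl
  rw [hM]
  unfold tv
  have e : ∀ x, |(garbleLeft q₁ u x).toReal - (garbleRight v q₂ x).toReal|
      = ((garbleLeft q₁ u x).toReal + (garbleRight v q₂ x).toReal)
        - 2 * min (garbleLeft q₁ u x).toReal (garbleRight v q₂ x).toReal := by
    intro x
    rcases le_total (garbleLeft q₁ u x).toReal (garbleRight v q₂ x).toReal with h | h
    · rw [min_eq_left h, abs_of_nonpos (by linarith)]; ring
    · rw [min_eq_right h, abs_of_nonneg (by linarith)]; ring
  simp only [e]
  rw [Summable.tsum_sub ((pmf_summable _).add (pmf_summable _)) (hs.mul_left 2),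
    Summable.tsum_add (pmf_summable _) (pmf_summable _), pmf_tsum, pmf_tsum, tsum_mul_left]
  norm_num

theorem complete {q : ℕ → ℕ → ℝ} (hq : q ∈ Sub) :
    ∃ σ : Garbling, ∀ c i, q c i ≤ (σ c i).toReal := by
  obtain ⟨σ, hσ⟩ := exists_garbling
    (fun c i => q c i + if i = 0 then (1 - ∑' i, q c i) else 0)
    (fun c i => by
      have := Sub.tsum_le hq c
      have := (hq c).1 i
      split_ifs <;> linarith)
    (fun c => by
      have h := (Sub.summable hq c).hasSum.add (hasSum_ite_eq 0 (1 - ∑' i, q c i))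
      simpa using h)
  refine ⟨σ, fun c i => ?_⟩
  rw [hσ]
  have := Sub.tsum_le hq c
  split_ifs <;> linarith

theorem attain [Fintype K] (u v : InfoStruct K) : ∃ q₁ q₂ : Garbling,
      ∀ q₁' q₂' : Garbling,
        tv (garbleLeft q₁ u) (garbleRight v q₂)
          ≤ tv (garbleLeft q₁' u) (garbleRight v q₂') := by
  obtain ⟨⟨p₁, p₂⟩, ⟨hp1, hp2⟩, hp⟩ := (Sub.isCompact.prod Sub.isCompact).exists_isMaxOn
    ⟨(_, _), Sub.of_garbling (Classical.arbitrary _), Sub.of_garbling (Classical.arbitrary _)⟩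
    (MF_continuousOn u v)
  obtain ⟨q₁, h1⟩ := complete hp1
  obtain ⟨q₂, h2⟩ := complete hp2
  refine ⟨q₁, q₂, fun q₁' q₂' => ?_⟩
  rw [tv_eq, tv_eq]
  have a := MF_mono u v hp1 hp2 (Sub.of_garbling q₁) (Sub.of_garbling q₂) h1 h2
  have b : MF u v (fun c i => (q₁' c i).toReal, fun c i => (q₂' c i).toReal) ≤ MF u v (p₁, p₂) :=
    hp (Set.mk_mem_prod (Sub.of_garbling q₁') (Sub.of_garbling q₂'))
  linarith

end ValueDistance
namespace ValueDistance

theorem sep {ι : Type} [Fintype ι] (W : Set (ι → ℝ)) (hW : Convex ℝ W) (r : ℝ)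
    (h : ∀ w ∈ W, r ≤ ∑ i, |w i|) :
    ∃ G : ι → ℝ, (∀ i, |G i| ≤ 1) ∧ ∀ w ∈ W, r ≤ ∑ i, G i * w i := by
  classical
  rcases le_or_gt r 0 with hr | hr
  · exact ⟨0, by simp, fun w _ => by simpa using hr⟩
  have hBo : IsOpen {x : ι → ℝ | ∑ i, |x i| < r} :=
    isOpen_lt (by fun_prop) (by fun_prop)
  have hBc : Convex ℝ {x : ι → ℝ | ∑ i, |x i| < r} := by
    have : ConvexOn ℝ Set.univ (fun x : ι → ℝ => ∑ i, |x i|) := by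
      refine ⟨convex_univ, fun x _ y _ a b ha hb _ => ?_⟩
      simp only [smul_eq_mul, Finset.mul_sum, ← Finset.sum_add_distrib]
      refine Finset.sum_le_sum (fun i _ => ?_)
      simp only [Pi.add_apply, Pi.smul_apply, smul_eq_mul]
      refine (abs_add_le _ _).trans ?_
      rw [abs_mul, abs_mul, abs_of_nonneg ha, abs_of_nonneg hb]
    simpa using this.convex_lt r
  have hd : Disjoint {x : ι → ℝ | ∑ i, |x i| < r} W := by
    rw [Set.disjoint_left]
    intro x hx hxW
    exact absurd (h x hxW) (not_le.2 hx)
  obtain ⟨f, s, hf1, hf2⟩ := geometric_hahn_banach_open hBc hBo hW hd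
  have hs : 0 < s := by
    have := hf1 0 (by simpa using hr)
    simpa using this
  have hb : ∀ i, |f (Pi.single i 1)| * r ≤ s := by
    intro i
    by_contra! hc
    have hF : 0 < |f (Pi.single i 1)| := by
      rcases (abs_nonneg (f (Pi.single i 1))).eq_or_lt with h0 | h0
      · rw [← h0] at hc; linarith
      · exact h0
    set F := f (Pi.single i 1) with hFdef
    have h1 := hf1 ((s / |F| * SignType.sign F) • Pi.single i 1) (by
      simp only [Set.mem_ofPred_eq, Pi.smul_apply, smul_eq_mul]
      rw [Finset.sum_eq_single i]
      · have hsg : |((SignType.sign F : SignType) : ℝ)| = 1 := by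
          rcases lt_or_gt_of_ne (abs_pos.1 hF) with h | h
          · simp [sign_neg h]
          · simp [sign_pos h]
        rw [Pi.single_eq_same, mul_one, abs_mul, hsg, mul_one, abs_of_pos (div_pos hs hF),
          div_lt_iff₀ hF]
        linarith
      · intro b _ hb; simp [hb]
      · simp)
    rw [map_smul, smul_eq_mul, ← hFdef, mul_assoc, sign_mul_self, div_mul_cancel₀ _ hF.ne'] at h1
    exact lt_irrefl _ h1
  refine ⟨fun i => r / s * f (Pi.single i 1), fun i => ?_, fun w hw => ?_⟩
  · rw [abs_mul, abs_of_pos (div_pos hr hs), div_mul_eq_mul_div, div_le_one hs, mul_comm]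
    exact hb i
  · have hfw : f w = ∑ i, f (Pi.single i 1) * w i := by
      conv_lhs => rw [pi_eq_sum_univ' w]
      rw [map_sum]
      refine Finset.sum_congr rfl (fun i _ => ?_)
      rw [map_smul, smul_eq_mul, mul_comm]
    have := hf2 w hw
    simp only [mul_assoc]
    rw [← Finset.mul_sum, ← hfw, div_mul_eq_mul_div, le_div_iff₀ hs]
    exact mul_le_mul_of_nonneg_left this hr.le

theorem box_sum [Fintype K] (L : ℕ) (F : K × ℕ × ℕ → ℝ)
    (hF : ∀ x : K × ℕ × ℕ, ¬ (x.2.1 < L ∧ x.2.2 < L) → F x = 0) :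
    HasSum F (∑ p : K × Fin L × Fin L, F (p.1, p.2.1, p.2.2)) := by
  have hinj : Function.Injective
      (fun p : K × Fin L × Fin L => ((p.1, (p.2.1 : ℕ), (p.2.2 : ℕ)) : K × ℕ × ℕ)) := by
    rintro ⟨a, b, c⟩ ⟨a', b', c'⟩ hab
    simpa [Fin.ext_iff] using hab
  have := (hinj.hasSum_iff (f := F) (a := ∑ p : K × Fin L × Fin L, F (p.1, p.2.1, p.2.2)) (by
    rintro ⟨k, i, j⟩ hx
    refine hF _ (fun hh => hx ?_)
    exact ⟨(k, ⟨i, hh.1⟩, ⟨j, hh.2⟩), rfl⟩)).1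
  exact this (hasSum_fintype _)

theorem left_zero (u : InfoStruct K) (L : ℕ) (q : Garbling) (hq : GarblingIn L q) (k : K) (i j : ℕ)
    (hi : L ≤ i) : (garbleLeft q u (k, i, j)).toReal = 0 := by
  rw [left_apply]
  have : ∀ c, q c i = 0 := fun c => by
    by_contra h; exact absurd (hq c i h) (not_lt.2 hi)
  simp [this]

theorem right_zero (u : InfoStruct K) (L : ℕ) (q : Garbling) (hq : GarblingIn L q) (k : K)
    (i j : ℕ) (hj : L ≤ j) : (garbleRight u q (k, i, j)).toReal = 0 := by
  rw [right_apply]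
  have : ∀ c, q c j = 0 := fun c => by
    by_contra h; exact absurd (hq c j h) (not_lt.2 hj)
  simp [this]

noncomputable def tl1 (L : ℕ) (x : K × ℕ × ℕ) : ℝ := if L ≤ x.2.1 then 1 else 0
noncomputable def tl2 (L : ℕ) (x : K × ℕ × ℕ) : ℝ := if L ≤ x.2.2 then 1 else 0

theorem tl1_abs (L : ℕ) (x : K × ℕ × ℕ) : |tl1 L x| ≤ 1 := by unfold tl1; split_ifs <;> simp
theorem tl2_abs (L : ℕ) (x : K × ℕ × ℕ) : |tl2 L x| ≤ 1 := by unfold tl2; split_ifs <;> simp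

noncomputable def eps (u v : InfoStruct K) (L : ℕ) : ℝ := EE u (tl2 L) + EE v (tl1 L)

theorem eps_tendsto (u v : InfoStruct K) :
    Filter.Tendsto (eps u v) Filter.atTop (nhds 0) := by
  have key : ∀ (P : InfoStruct K) (t : ℕ → K × ℕ × ℕ → ℝ) (_ : ∀ L x, |t L x| ≤ 1)
      (_ : ∀ x, ∀ᶠ L in Filter.atTop, t L x = 0),
      Filter.Tendsto (fun L => EE P (t L)) Filter.atTop (nhds 0) := by
    intro P t ht ht0
    have := tendsto_tsum_of_dominated_convergence (𝓕 := Filter.atTop)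
      (f := fun L x => (P x).toReal * t L x) (g := fun _ => (0:ℝ)) (pmf_summable P)
      (fun x => by
        refine tendsto_const_nhds.congr' ?_
        filter_upwards [ht0 x] with L hL
        simp [hL])
      (Filter.Eventually.of_forall (fun L x => by
        rw [norm_mul, Real.norm_of_nonneg ENNReal.toReal_nonneg]
        exact mul_le_of_le_one_right ENNReal.toReal_nonneg (ht L x)))
    simpa [EE] using this
  have h := (key u tl2 tl2_abs (fun x => by
      filter_upwards [Filter.eventually_gt_atTop x.2.2] with L hL
      simp [tl2, hL])).add (key v tl1 tl1_abs (fun x => by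
      filter_upwards [Filter.eventually_gt_atTop x.2.1] with L hL
      simp [tl1, hL]))
  have e : eps u v = fun L => EE u (tl2 L) + EE v (tl1 L) := rfl
  rw [e]
  simpa using h

noncomputable def out (L : ℕ) (a b : K × ℕ × ℕ → ℝ) (x : K × ℕ × ℕ) : ℝ :=
  if x.2.1 < L ∧ x.2.2 < L then 0 else a x + b x

theorem out_summable (u v : InfoStruct K) (L : ℕ) :
    Summable (out L (fun x => (u x).toReal) (fun x => (v x).toReal)) := by
  refine Summable.of_nonneg_of_le (fun x => ?_) (fun x => ?_)
    ((pmf_summable u).add (pmf_summable v))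
  · unfold out; split_ifs
    · exact le_rfl
    · exact add_nonneg ENNReal.toReal_nonneg ENNReal.toReal_nonneg
  · unfold out; split_ifs
    · exact add_nonneg ENNReal.toReal_nonneg ENNReal.toReal_nonneg
    · exact le_rfl

theorem out_le (u v : InfoStruct K) (L : ℕ) (σ τ : Garbling) (hσ : GarblingIn L σ)
    (hτ : GarblingIn L τ) :
    ∑' x, out L (fun x => (garbleLeft σ u x).toReal) (fun x => (garbleRight v τ x).toReal) x
      ≤ eps u v L := by
  have e1 : EE (garbleLeft σ u) (tl2 L) = EE u (tl2 L) := by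
    rw [EE_left _ _ _ (tl2_abs L)]
    congr 1; funext x
    exact EE_const _ (tl2 L x)
  have e2 : EE (garbleRight v τ) (tl1 L) = EE v (tl1 L) := by
    rw [EE_right _ _ _ (tl1_abs L)]
    congr 1; funext x
    exact EE_const _ (tl1 L x)
  unfold eps
  rw [← e1, ← e2]
  have s1 := EE_summable (garbleLeft σ u) (tl2 L) (tl2_abs L)
  have s2 := EE_summable (garbleRight v τ) (tl1 L) (tl1_abs L)
  unfold EE
  rw [← Summable.tsum_add s1 s2]
  refine Summable.tsum_le_tsum (fun x => ?_) (out_summable _ _ L) (s1.add s2)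
  rcases x with ⟨k, i, j⟩
  have p1 : 0 ≤ (garbleLeft σ u (k, i, j)).toReal := ENNReal.toReal_nonneg
  have p2 : 0 ≤ (garbleRight v τ (k, i, j)).toReal := ENNReal.toReal_nonneg
  rcases lt_or_ge i L with hi | hi <;> rcases lt_or_ge j L with hj | hj
  · simp [out, tl1, tl2, hi, hj, not_le.2 hi, not_le.2 hj]
  · have := right_zero v L τ hτ k i j hj
    simp [out, tl1, tl2, hi, hj, this, not_lt.2 hj]
  · have := left_zero u L σ hσ k i j hi
    simp [out, tl1, tl2, hj, hi, this, not_lt.2 hi]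
  · have := right_zero v L τ hτ k i j hj
    have := left_zero u L σ hσ k i j hi
    simp [out, tl1, tl2, *]

theorem box_tv [Fintype K] (u v : InfoStruct K) (L : ℕ) (σ τ : Garbling) (hσ : GarblingIn L σ)
    (hτ : GarblingIn L τ) :
    tv (garbleLeft σ u) (garbleRight v τ) - eps u v L ≤
      ∑ p : K × Fin L × Fin L, |(garbleRight v τ (p.1, p.2.1, p.2.2)).toReal -
        (garbleLeft σ u (p.1, p.2.1, p.2.2)).toReal| := by
  have hb := box_sum L (fun x : K × ℕ × ℕ => if x.2.1 < L ∧ x.2.2 < L then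
    |(garbleRight v τ x).toReal - (garbleLeft σ u x).toReal| else 0)
    (fun x hx => by simp only [hx, if_false])
  simp only [Fin.is_lt, and_self, if_true] at hb
  have ho := out_summable (garbleLeft σ u) (garbleRight v τ) L
  have hle := out_le u v L σ τ hσ hτ
  have ht : tv (garbleLeft σ u) (garbleRight v τ) = (∑ p : K × Fin L × Fin L,
      |(garbleRight v τ (p.1, p.2.1, p.2.2)).toReal -
        (garbleLeft σ u (p.1, p.2.1, p.2.2)).toReal|) +
      ∑' x, out L (fun x => (garbleLeft σ u x).toReal) (fun x => (garbleRight v τ x).toReal) x := by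
    rw [← hb.tsum_eq, ← Summable.tsum_add hb.summable ho]
    unfold tv
    refine tsum_congr (fun x => ?_)
    rcases x with ⟨k, i, j⟩
    have p1 : 0 ≤ (garbleLeft σ u (k, i, j)).toReal := ENNReal.toReal_nonneg
    have p2 : 0 ≤ (garbleRight v τ (k, i, j)).toReal := ENNReal.toReal_nonneg
    unfold out
    dsimp only
    split_ifs with hc
    · rw [abs_sub_comm, add_zero]
    · rcases lt_or_ge i L with hi | hi
      · have hj : L ≤ j := by by_contra h; exact hc ⟨hi, not_le.1 h⟩
        simp [right_zero v L τ hτ k i j hj]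
      · simp [left_zero u L σ hσ k i j hi]
  linarith

noncomputable def mkg (L : ℕ) (G : K × Fin L × Fin L → ℝ) (k : K) (i j : ℕ) : ℝ :=
  if hi : i < L then if hj : j < L then G (k, ⟨i, hi⟩, ⟨j, hj⟩) else 1 else -1

theorem mkg_isPayoff (L : ℕ) (G : K × Fin L × Fin L → ℝ) (hG : ∀ p, |G p| ≤ 1) :
    IsPayoffL L (mkg L G) := by
  refine ⟨fun k i j => ?_, fun k i j hi => ?_, fun k i j hi hj => ?_⟩
  · unfold mkg
    split_ifs
    · exact abs_le.1 (hG _)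
    · norm_num
    · norm_num
  · simp [mkg, not_lt.2 hi]
  · simp [mkg, hi, not_lt.2 hj]

theorem box_g [Fintype K] (u v : InfoStruct K) (L : ℕ) (G : K × Fin L × Fin L → ℝ)
    (hG : ∀ p, |G p| ≤ 1) (σ τ : Garbling) (hσ : GarblingIn L σ)
    (hτ : GarblingIn L τ) :
    (∑ p : K × Fin L × Fin L, G p * ((garbleRight v τ (p.1, p.2.1, p.2.2)).toReal -
        (garbleLeft σ u (p.1, p.2.1, p.2.2)).toReal)) - eps u v L ≤
      EE (garbleRight v τ) (fun x => mkg L G x.1 x.2.1 x.2.2)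
      - EE (garbleLeft σ u) (fun x => mkg L G x.1 x.2.1 x.2.2) := by
  have hg : ∀ x : K × ℕ × ℕ, |mkg L G x.1 x.2.1 x.2.2| ≤ 1 := fun x =>
    IsPayoff.abs ⟨L, mkg_isPayoff L G hG⟩ _ _ _
  have hb := box_sum L (fun x : K × ℕ × ℕ => if x.2.1 < L ∧ x.2.2 < L then
    mkg L G x.1 x.2.1 x.2.2 * ((garbleRight v τ x).toReal - (garbleLeft σ u x).toReal) else 0)
    (fun x hx => by simp only [hx, if_false])
  simp only [Fin.is_lt, and_self, if_true] at hb
  have hmk : ∀ p : K × Fin L × Fin L, mkg L G p.1 p.2.1 p.2.2 = G p := fun p => by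
    simp [mkg]
  simp only [hmk] at hb
  have ho := out_summable (garbleLeft σ u) (garbleRight v τ) L
  have hle := out_le u v L σ τ hσ hτ
  have ht : EE (garbleRight v τ) (fun x => mkg L G x.1 x.2.1 x.2.2)
      - EE (garbleLeft σ u) (fun x => mkg L G x.1 x.2.1 x.2.2) = (∑ p : K × Fin L × Fin L,
      G p * ((garbleRight v τ (p.1, p.2.1, p.2.2)).toReal -
        (garbleLeft σ u (p.1, p.2.1, p.2.2)).toReal)) -
      ∑' x, out L (fun x => (garbleLeft σ u x).toReal) (fun x => (garbleRight v τ x).toReal) x := by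
    rw [← hb.tsum_eq, ← Summable.tsum_sub hb.summable ho]
    unfold EE
    rw [← Summable.tsum_sub (EE_summable _ _ hg) (EE_summable _ _ hg)]
    refine tsum_congr (fun x => ?_)
    rcases x with ⟨k, i, j⟩
    unfold out
    dsimp only
    split_ifs with hc
    · ring
    · rcases lt_or_ge i L with hi | hi
      · have hj : L ≤ j := by by_contra h; exact hc ⟨hi, not_le.1 h⟩
        simp [right_zero v L τ hτ k i j hj, mkg, hi, not_lt.2 hj]
      · simp [left_zero u L σ hσ k i j hi, mkg, not_lt.2 hi]
  linarith

theorem mix (L : ℕ) (σ₁ σ₂ : Garbling) (h1 : GarblingIn L σ₁) (h2 : GarblingIn L σ₂) (a b : ℝ)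
    (ha : 0 ≤ a) (hb : 0 ≤ b) (hab : a + b = 1) : ∃ σ : Garbling, GarblingIn L σ ∧
      ∀ c i, (σ c i).toReal = a * (σ₁ c i).toReal + b * (σ₂ c i).toReal := by
  obtain ⟨σ, hσ⟩ := exists_garbling (fun c i => a * (σ₁ c i).toReal + b * (σ₂ c i).toReal)
    (fun c i => add_nonneg (mul_nonneg ha ENNReal.toReal_nonneg)
      (mul_nonneg hb ENNReal.toReal_nonneg))
    (fun c => by
      have e1 := (pmf_summable (σ₁ c)).hasSum
      have e2 := (pmf_summable (σ₂ c)).hasSum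
      rw [pmf_tsum] at e1 e2
      have := (e1.mul_left a).add (e2.mul_left b)
      simpa [hab] using this)
  refine ⟨σ, fun n m hnm => ?_, hσ⟩
  by_contra hm
  have z1 : σ₁ n m = 0 := by by_contra h; exact hm (h1 n m h)
  have z2 : σ₂ n m = 0 := by by_contra h; exact hm (h2 n m h)
  have := hσ n m
  rw [z1, z2] at this
  simp [ENNReal.toReal_eq_zero_iff, hnm, PMF.apply_ne_top] at this

theorem exists_G [Fintype K] (u v : InfoStruct K) (L : ℕ) (r : ℝ)
    (hr : ∀ σ τ : Garbling, r ≤ tv (garbleLeft σ u) (garbleRight v τ)) :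
    ∃ G : K × Fin L × Fin L → ℝ, (∀ p, |G p| ≤ 1) ∧ ∀ σ τ, GarblingIn L σ → GarblingIn L τ →
      r - eps u v L ≤ ∑ p : K × Fin L × Fin L, G p * ((garbleRight v τ (p.1, p.2.1, p.2.2)).toReal -
        (garbleLeft σ u (p.1, p.2.1, p.2.2)).toReal) := by
  obtain ⟨G, hG, h⟩ := sep (ι := K × Fin L × Fin L)
    {w | ∃ σ τ, GarblingIn L σ ∧ GarblingIn L τ ∧
      w = fun p => (garbleRight v τ (p.1, p.2.1, p.2.2)).toReal -
        (garbleLeft σ u (p.1, p.2.1, p.2.2)).toReal} (by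
      rintro _ ⟨σ₁, τ₁, hσ1, hτ1, rfl⟩ _ ⟨σ₂, τ₂, hσ2, hτ2, rfl⟩ a b ha hb hab
      obtain ⟨σ, hσ, eσ⟩ := mix L σ₁ σ₂ hσ1 hσ2 a b ha hb hab
      obtain ⟨τ, hτ, eτ⟩ := mix L τ₁ τ₂ hτ1 hτ2 a b ha hb hab
      refine ⟨σ, τ, hσ, hτ, ?_⟩
      funext p
      have l1 : (garbleLeft σ u (p.1, p.2.1, p.2.2)).toReal
          = a * (garbleLeft σ₁ u (p.1, p.2.1, p.2.2)).toReal
            + b * (garbleLeft σ₂ u (p.1, p.2.1, p.2.2)).toReal := by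
        simp only [left_apply, eσ]
        rw [← tsum_mul_left, ← tsum_mul_left, ← Summable.tsum_add
          ((aL_summable u (Sub.of_garbling σ₁) _ _ _).mul_left a)
          ((aL_summable u (Sub.of_garbling σ₂) _ _ _).mul_left b)]
        refine tsum_congr (fun c => ?_); ring
      have l2 : (garbleRight v τ (p.1, p.2.1, p.2.2)).toReal
          = a * (garbleRight v τ₁ (p.1, p.2.1, p.2.2)).toReal
            + b * (garbleRight v τ₂ (p.1, p.2.1, p.2.2)).toReal := by
        simp only [right_apply, eτ]
        rw [← tsum_mul_left, ← tsum_mul_left, ← Summable.tsum_add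
          ((bR_summable v (Sub.of_garbling τ₁) _ _ _).mul_left a)
          ((bR_summable v (Sub.of_garbling τ₂) _ _ _).mul_left b)]
        refine tsum_congr (fun c => ?_); ring
      simp only [Pi.add_apply, Pi.smul_apply, smul_eq_mul, l1, l2]
      ring) (r - eps u v L) (by
      rintro _ ⟨σ, τ, hσ, hτ, rfl⟩
      have := box_tv u v L σ τ hσ hτ
      have := hr σ τ
      linarith)
  exact ⟨G, hG, fun σ τ hσ hτ => h _ ⟨σ, τ, hσ, hτ, rfl⟩⟩

noncomputable def cmp (L : ℕ) (σ : Garbling) : Garbling :=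
  fun c => (σ c).map (fun i => if i < L then i else 0)

theorem cmp_in (L : ℕ) (hL : 0 < L) (σ : Garbling) : GarblingIn L (cmp L σ) := by
  intro n m h
  rw [← PMF.mem_support_iff] at h
  unfold cmp at h
  rw [PMF.mem_support_map_iff] at h
  obtain ⟨a, -, rfl⟩ := h
  split_ifs with hc
  · exact hc
  · exact hL

theorem cmp_left (u : InfoStruct K) (L : ℕ) (hL : 0 < L) (g : K → ℕ → ℕ → ℝ) (hg : IsPayoffL L g)
    (σ : Garbling) : EE (garbleLeft σ u) (fun x => g x.1 x.2.1 x.2.2)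
      ≤ EE (garbleLeft (cmp L σ) u) (fun x => g x.1 x.2.1 x.2.2) := by
  have ha : ∀ k i j, |g k i j| ≤ 1 := IsPayoff.abs ⟨L, hg⟩
  rw [EE_left _ _ _ (fun x => ha _ _ _), EE_left _ _ _ (fun x => ha _ _ _)]
  refine EE_mono _ _ _ (fun x => EE_abs _ _ (fun i => ha _ _ _))
    (fun x => EE_abs _ _ (fun i => ha _ _ _)) (fun x => ?_)
  unfold cmp
  rw [EE_map _ _ _ (fun i => ha _ _ _)]
  refine EE_mono _ _ _ (fun i => ha _ _ _) (fun i => ha _ _ _) (fun i => ?_)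
  dsimp only
  split_ifs with hc
  · exact le_rfl
  · rw [hg.2.1 _ _ _ (not_lt.1 hc)]
    exact (hg.1 _ _ _).1

theorem cmp_right (u : InfoStruct K) (L : ℕ) (g : K → ℕ → ℕ → ℝ) (hg : IsPayoffL L g)
    (σ : Garbling) : EE (garbleRight u (cmp L σ)) (fun x => g x.1 x.2.1 x.2.2)
      ≤ EE (garbleRight u σ) (fun x => g x.1 x.2.1 x.2.2) := by
  have ha : ∀ k i j, |g k i j| ≤ 1 := IsPayoff.abs ⟨L, hg⟩
  rw [EE_right _ _ _ (fun x => ha _ _ _), EE_right _ _ _ (fun x => ha _ _ _)]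
  refine EE_mono _ _ _ (fun x => EE_abs _ _ (fun i => ha _ _ _))
    (fun x => EE_abs _ _ (fun i => ha _ _ _)) (fun x => ?_)
  unfold cmp
  rw [EE_map _ _ _ (fun i => ha _ _ _)]
  refine EE_mono _ _ _ (fun i => ha _ _ _) (fun i => ha _ _ _) (fun i => ?_)
  dsimp only
  split_ifs with hc
  · exact le_rfl
  · rcases lt_or_ge x.2.1 L with h | h
    · rw [hg.2.2 _ _ i h (not_lt.1 hc)]
      exact (hg.1 _ _ _).2
    · rw [hg.2.1 _ _ _ h, hg.2.1 _ _ _ h]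

theorem exists_g [Fintype K] (u v : InfoStruct K) (L : ℕ) (hL : 0 < L) (r : ℝ)
    (hr : ∀ σ τ : Garbling, r ≤ tv (garbleLeft σ u) (garbleRight v τ)) :
    ∃ g : K → ℕ → ℕ → ℝ, IsPayoff g ∧ r - 2 * eps u v L ≤ val v g - val u g := by
  obtain ⟨G, hG, h⟩ := exists_G u v L r hr
  have hg := mkg_isPayoff L G hG
  refine ⟨mkg L G, ⟨L, hg⟩, lower u v _ (IsPayoff.abs ⟨L, hg⟩) _ (fun σ τ => ?_)⟩
  have h1 := cmp_left u L hL _ hg σ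
  have h2 := cmp_right v L _ hg τ
  have h3 := h _ _ (cmp_in L hL σ) (cmp_in L hL τ)
  have h4 := box_g u v L G hG _ _ (cmp_in L hL σ) (cmp_in L hL τ)
  linarith

end ValueDistance
namespace ValueDistance

/-- Theorem 1 (first part): for all information structures `u, v`,
`sup_{g ∈ 𝒢} (val(v,g) − val(u,g)) = min_{q₁,q₂ ∈ 𝒬} ‖q₁.u − v.q₂‖`,
and the minimum is attained. -/
theorem sup_val_diff_eq_min_garbling_tv (K : Type) [Fintype K]
    (hK : 2 ≤ Fintype.card K) (u v : InfoStruct K) :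
    ∃ q₁ q₂ : Garbling,
      (∀ q₁' q₂' : Garbling,
        tv (garbleLeft q₁ u) (garbleRight v q₂)
          ≤ tv (garbleLeft q₁' u) (garbleRight v q₂')) ∧
      (⨆ g : {g : K → ℕ → ℕ → ℝ // IsPayoff g}, (val v g.1 - val u g.1))
        = tv (garbleLeft q₁ u) (garbleRight v q₂) := by
  obtain ⟨q₁, q₂, hq⟩ := attain u v
  refine ⟨q₁, q₂, hq, ?_⟩
  have hup : ∀ g : {g : K → ℕ → ℕ → ℝ // IsPayoff g}, val v g.1 - val u g.1
      ≤ tv (garbleLeft q₁ u) (garbleRight v q₂) :=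
    fun g => upper u v g.1 (IsPayoff.abs g.2) q₁ q₂
  haveI : Nonempty {g : K → ℕ → ℕ → ℝ // IsPayoff g} :=
    ⟨⟨_, 0, mkg_isPayoff 0 (fun _ => 0) (by simp)⟩⟩
  refine le_antisymm (ciSup_le hup) ?_
  have hb : BddAbove (Set.range fun g : {g : K → ℕ → ℕ → ℝ // IsPayoff g} =>
      val v g.1 - val u g.1) := ⟨_, by rintro _ ⟨g, rfl⟩; exact hup g⟩
  have ht : Filter.Tendsto (fun L => tv (garbleLeft q₁ u) (garbleRight v q₂) - 2 * eps u v L)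
      Filter.atTop (nhds (tv (garbleLeft q₁ u) (garbleRight v q₂))) := by
    simpa using ((eps_tendsto u v).const_mul 2).const_sub
      (tv (garbleLeft q₁ u) (garbleRight v q₂))
  refine le_of_tendsto ht ?_
  filter_upwards [Filter.eventually_gt_atTop 0] with L hL
  obtain ⟨g, hg, h⟩ := exists_g u v L hL _ hq
  exact h.trans (le_ciSup hb ⟨g, hg⟩)

end ValueDistance
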